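/- arXiv:2110.08671 — 2 statements merged into one kernel-verified Lean document; each statement's English description precedes it below -/
import Mathlib

section
/- (Theorem 1: the game rule v*(s) is incentive-compatible.) Let ε ∈ (0,1), v̄ > 0, s̄ > 0, c_d ∈ ℝ, η > 0, ξ > 0 with ηξ > 1, R ∈ ℝ, α_s > 0, β_s ≥ 0. Define v*(s) = [(1−ε)(ηξ−1)·v̄·s − ε·s̄·(s − c_d)] / (2ε(1−ηξ)·s̄), g(v,s) = ε·v/v̄ + (1−ε)·s/s̄, A₀ = ε/v̄ + (ηξ−1)(ε−1)/s̄, A₁ = 2(ηξ−1), assume v̄·A₀/(ε·A₁) + 1 > 0, and for each τ ∈ ℝ define s*(τ) = (R + α_s·τ + β_s + c_d/A₁) / (2·(v̄·A₀/(ε·A₁) + 1)) + c_d·ε / (2·v̄·A₁·(A₀/A₁ − (ε−1)/s̄)) and, for the true leakage degree θ, F_s(s; θ) = (R + α_s·θ + β_s − v*(s) − s)·g(v*(s), s). Then for every θ ∈ [0,1] and every θ̂ ∈ [0,1] with θ̂ ≠ θ, the server's utility from responding according to the fake private information θ̂ is strictly lower than from responding truthfully: F_s(s*(θ̂); θ)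 < F_s(s*(θ); θ). -/
/-!
Along the game rule, the server's margin and the collection probability are both affine in its
strategy `s`, with slopes of opposite sign, so the utility is a strictly concave quadratic in `s`.
Its vertex is the midpoint of its two roots, and the two summands of `s*(θ)` are the halves of
these roots: `s*(θ)` is the only maximizer of the utility among all real strategies. Since
`τ ↦ s*(τ)` is affine with nonzero slope, a fake report always moves the server off the maximizer.
-/

theorem affine_mul_affine_eq_sub_sq {K : Type*} [Field K] [NeZero (2 : K)] {a b : K}
    (ha : a ≠ 0) (hb : b ≠ 0) (p q s : K) :
    (p - a * s) * (b * s - q) =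
      (b * p - a * q) ^ 2 / (4 * (a * b)) - a * b * (s - (p / (2 * a) + q / (2 * b))) ^ 2 := by
  have h4 : (4 : K) ≠ 0 := by
    rw [← two_add_two_eq_four, ← two_mul]
    exact mul_ne_zero two_ne_zero two_ne_zero
  field_simp
  ring

theorem affine_mul_affine_lt_vertex {K : Type*} [Field K] [LinearOrder K] [IsStrictOrderedRing K]
    {a b p q s m : K} (hab : 0 < a * b) (hm : m = p / (2 * a) + q / (2 * b)) (hs : s ≠ m) :
    (p - a * s) * (b * s - q) < (p - a * m) * (b * m - q) := by
  have ha : a ≠ 0 := left_ne_zero_of_mul hab.ne'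
  have hb : b ≠ 0 := right_ne_zero_of_mul hab.ne'
  have dist_sq_pos : 0 < (s - m) ^ 2 := sq_pos_of_ne_zero (sub_ne_zero.mpr hs)
  calc (p - a * s) * (b * s - q)
      = (b * p - a * q) ^ 2 / (4 * (a * b)) - a * b * (s - m) ^ 2 := by
        rw [affine_mul_affine_eq_sub_sq ha hb, hm]
    _ < (b * p - a * q) ^ 2 / (4 * (a * b)) := sub_lt_self _ (mul_pos hab dist_sq_pos)
    _ = (p - a * m) * (b * m - q) := by
        rw [affine_mul_affine_eq_sub_sq ha hb, ← hm, sub_self]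
        ring

/-- The parameters of the data submission game: the weight `ε`, the maxima `vb = v̄` and `sb = s̄`,
the sensing cost `cd`, the product `κ = ηξ` of the two cost scalars (which enter only through it),
the requestor's reward `R`, and the coefficients `α`, `β` of the leakage reward `α θ + β`. -/
structure SubmissionGame where
  (ε vb sb cd κ R α β : ℝ)

namespace SubmissionGame

variable (G : SubmissionGame)

/-- The rule `v*(s)` to which the device commits. -/
noncomputable def gameRule (s : ℝ) : ℝ :=
  ((1 - G.ε) * (G.κ - 1) * G.vb * s - G.ε * G.sb * (s - G.cd)) / (2 * G.ε * (1 - G.κ) * G.sb)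

/-- The probability `g(v, s)` of successful data collection; it is not clamped to `[0, 1]`. -/
noncomputable def collectionProb (v s : ℝ) : ℝ :=
  G.ε * v / G.vb + (1 - G.ε) * s / G.sb

/-- The integrand `F_s(s; θ)` of the server's expected utility under the game rule, for strategy `s`
and true leakage degree `θ`. -/
noncomputable def utility (s θ : ℝ) : ℝ :=
  (G.R + G.α * θ + G.β - G.gameRule s - s) * G.collectionProb (G.gameRule s) s

/-- The paper's constant `A₀`. -/
noncomputable def A₀ : ℝ := G.ε / G.vb + (G.κ - 1) * (G.ε - 1) / G.sb

/-- The paper's constant `A₁`. -/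
noncomputable def A₁ : ℝ := 2 * (G.κ - 1)

/-- The slope of the affine function `G.gameRule`, in the form in which it occurs in `s*`. -/
noncomputable def ruleSlope : ℝ := G.vb * G.A₀ / (G.ε * G.A₁)

/-- The slope of the collection probability `g(v*(s), s)` along the game rule, in the form in which
it occurs in `s*`. -/
noncomputable def probSlope : ℝ := G.A₀ / G.A₁ - (G.ε - 1) / G.sb

/-- The server's best response `s*(τ)` to the reported leakage degree `τ`. -/
noncomputable def bestResponse (τ : ℝ) : ℝ :=
  (G.R + G.α * τ + G.β + G.cd / G.A₁) / (2 * (G.ruleSlope + 1)) +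
    G.cd * G.ε / (2 * G.vb * G.A₁ * G.probSlope)

variable {G}

theorem gameRule_eq (hε : G.ε ≠ 0) (hvb : G.vb ≠ 0) (hsb : G.sb ≠ 0) (hκ : G.κ ≠ 1) (s : ℝ) :
    G.gameRule s = G.ruleSlope * s - G.cd / G.A₁ := by
  have hκ_sub : G.κ - 1 ≠ 0 := sub_ne_zero.mpr hκ
  rw [gameRule, ruleSlope, A₀, A₁, ← neg_sub G.κ 1]
  field_simp
  ring

theorem collectionProb_gameRule_eq (hε : G.ε ≠ 0) (hvb : G.vb ≠ 0) (hsb : G.sb ≠ 0)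
    (hκ : G.κ ≠ 1) (s : ℝ) :
    G.collectionProb (G.gameRule s) s = G.probSlope * s - G.cd * G.ε / (G.vb * G.A₁) := by
  rw [collectionProb, gameRule_eq hε hvb hsb hκ, ruleSlope, probSlope]
  field_simp
  ring

theorem utility_eq (hε : G.ε ≠ 0) (hvb : G.vb ≠ 0) (hsb : G.sb ≠ 0) (hκ : G.κ ≠ 1) (s θ : ℝ) :
    G.utility s θ =
      (G.R + G.α * θ + G.β + G.cd / G.A₁ - (G.ruleSlope + 1) * s) *
        (G.probSlope * s - G.cd * G.ε / (G.vb * G.A₁)) := by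
  rw [utility, collectionProb_gameRule_eq hε hvb hsb hκ, gameRule_eq hε hvb hsb hκ]
  ring

theorem probSlope_pos (hε : 0 < G.ε) (hε_le : G.ε ≤ 1) (hvb : 0 < G.vb) (hsb : 0 < G.sb)
    (hκ : 1 < G.κ) : 0 < G.probSlope := by
  have hκ_sub : 0 < G.κ - 1 := sub_pos.mpr hκ
  have : 0 ≤ 1 - G.ε := sub_nonneg.mpr hε_le
  calc 0 < G.ε / (2 * (G.κ - 1) * G.vb) + (1 - G.ε) / (2 * G.sb) := by positivity
    _ = G.probSlope := by
        rw [probSlope, A₀, A₁]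
        field_simp
        ring

theorem bestResponse_injective (hα : G.α ≠ 0) (hslope : G.ruleSlope + 1 ≠ 0) :
    Function.Injective G.bestResponse := by
  intro τ τ' h
  simpa [bestResponse, div_left_inj' (mul_ne_zero two_ne_zero hslope), hα] using h

end SubmissionGame

theorem game_rule_incentive_compatible_general (G : SubmissionGame) (hε : 0 < G.ε)
    (hε_le : G.ε ≤ 1) (hvb : 0 < G.vb) (hsb : 0 < G.sb) (hκ : 1 < G.κ)
    (hslope : 0 < G.ruleSlope + 1) {s θ : ℝ} (hs : s ≠ G.bestResponse θ) :
    G.utility s θ < G.utility (G.bestResponse θ) θ := by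
  have bestResponse_eq_vertex : G.bestResponse θ =
      (G.R + G.α * θ + G.β + G.cd / G.A₁) / (2 * (G.ruleSlope + 1)) +
        G.cd * G.ε / (G.vb * G.A₁) / (2 * G.probSlope) := by
    rw [SubmissionGame.bestResponse, div_div]
    ring_nf
  have slopes_mul_pos : 0 < (G.ruleSlope + 1) * G.probSlope :=
    mul_pos hslope (SubmissionGame.probSlope_pos hε hε_le hvb hsb hκ)
  simp only [SubmissionGame.utility_eq hε.ne' hvb.ne' hsb.ne' hκ.ne']
  exact affine_mul_affine_lt_vertex slopes_mul_pos bestResponse_eq_vertex hs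

/-- Theorem 1 of the paper: the game rule `v*(s)` is
incentive-compatible: responding according to a fake leakage degree `θ̂ ≠ θ`
yields strictly lower utility than responding truthfully. -/
theorem game_rule_incentive_compatible
    (ε vb sb cd η ξ R αs βs : ℝ)
    (hε : ε ∈ Set.Ioo (0:ℝ) 1) (hvb : 0 < vb) (hsb : 0 < sb)
    (hη : 0 < η) (hξ : 0 < ξ) (hηξ : 1 < η * ξ)
    (hαs : 0 < αs) (hβs : 0 ≤ βs)
    (vstar : ℝ → ℝ) (g : ℝ → ℝ → ℝ) (A0 A1 : ℝ) (sstar : ℝ → ℝ) (Fs : ℝ → ℝ → ℝ)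
    (hvstar : ∀ s, vstar s = ((1 - ε) * (η * ξ - 1) * vb * s - ε * sb * (s - cd)) /
      (2 * ε * (1 - η * ξ) * sb))
    (hg : ∀ v s, g v s = ε * v / vb + (1 - ε) * s / sb)
    (hA0 : A0 = ε / vb + (η * ξ - 1) * (ε - 1) / sb)
    (hA1 : A1 = 2 * (η * ξ - 1))
    (hpos : vb * A0 / (ε * A1) + 1 > 0)
    (hsstar : ∀ τ, sstar τ = (R + αs * τ + βs + cd / A1) / (2 * (vb * A0 / (ε * A1) + 1))
      + cd * ε / (2 * vb * A1 * (A0 / A1 - (ε - 1) / sb)))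
    (hFs : ∀ s θ, Fs s θ = (R + αs * θ + βs - vstar s - s) * g (vstar s) s) :
    ∀ θ ∈ Set.Icc (0:ℝ) 1, ∀ θhat ∈ Set.Icc (0:ℝ) 1, θhat ≠ θ →
      Fs (sstar θhat) θ < Fs (sstar θ) θ := by
  intro θ _ θhat _ hne
  subst hA0 hA1
  let G : SubmissionGame := ⟨ε, vb, sb, cd, η * ξ, R, αs, βs⟩
  have responses_ne : G.bestResponse θhat ≠ G.bestResponse θ :=
    (SubmissionGame.bestResponse_injective (G := G) hαs.ne' hpos.ne').ne hne
  simp only [hFs, hg, hvstar, hsstar]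
  exact game_rule_incentive_compatible_general G hε.1 hε.2.le hvb hsb hηξ hpos responses_ne
end

section
/- (ZD linear payoff relation.) Let p : Fin 4 → ℝ, q : Fin 2 → ℝ, and let M be the 4×4 matrix with M i 0 = p i · q 0, M i 1 = p i · (1 − q 0), M i 2 = (1 − p i) · q 1, M i 3 = (1 − p i) · (1 − q 1); let p̃ = (p 0 − 1, p 1 − 1, p 2, p 3). Let v : Fin 4 → ℝ satisfy ∑ᵢ v i · M i j = v j for every j and ∑ᵢ v i = 1, and let x, y : Fin 4 → ℝ be the payoff vectors with expected payoffs E_b = ∑ᵢ v i · x i and E_r = ∑ᵢ v i · y i. If there exist α, β, γ ∈ ℝ such that p̃ i = α·x i + β·y i + γ for every i ∈ Fin 4, then α·E_b + β·E_r + γ = 0. -/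
/-!
Let `C` be the set of states in which the leader cooperates. The leader's cooperation probability
`p i` is the total mass that row `i` of the transition matrix puts on `C`, so `∑ i, v i * p i` is
the `v`-mass of `C` one round later, which equals the `v`-mass of `C` now by stationarity. Hence `v`
annihilates the ZD vector `p - 1_C`, whatever the requestor does, and pairing an affine relation
between this vector and the payoffs with `v` gives the same relation between the expected payoffs.
-/

theorem sum_mul_sum_mem_eq_sum_of_stationary {R S : Type*} [NonUnitalNonAssocSemiring R] [Fintype S]
    {C : Finset S} {M : S → S → R} {v : S → R} (hstat : ∀ j ∈ C, ∑ i, v i * M i j = v j) :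
    ∑ i, v i * ∑ j ∈ C, M i j = ∑ j ∈ C, v j := by
  simp_rw [Finset.mul_sum]
  rw [Finset.sum_comm]
  exact Finset.sum_congr rfl hstat

/-- The zero-determinant strategy vector `p̃` of a player who cooperates with probability `p i`
after state `i`, where `C` is the set of states in which that player has cooperated: `p` minus the
indicator of `C`. -/
def zdVector {R S : Type*} [Ring R] [DecidableEq S] (C : Finset S) (p : S → R) (i : S) : R :=
  p i - if i ∈ C then 1 else 0

theorem zdVector_fin_four {R : Type*} [Ring R] (p : Fin 4 → R) :
    zdVector {0, 1} p = ![p 0 - 1, p 1 - 1, p 2, p 3] := by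
  ext i
  fin_cases i <;> simp [zdVector]

theorem sum_mul_zdVector_eq_zero {R S : Type*} [Ring R] [Fintype S] [DecidableEq S]
    {C : Finset S} {p : S → R} {M : S → S → R} {v : S → R}
    (hp : ∀ i, ∑ j ∈ C, M i j = p i) (hstat : ∀ j ∈ C, ∑ i, v i * M i j = v j) :
    ∑ i, v i * zdVector C p i = 0 := by
  have mass_preserved : ∑ i, v i * p i = ∑ i ∈ C, v i := by
    simpa only [hp] using sum_mul_sum_mem_eq_sum_of_stationary hstat
  simp [zdVector, mul_sub, mass_preserved]

theorem sum_mul_affine_combination {R S : Type*} [CommSemiring R] [Fintype S]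
    (v x y : S → R) (α β γ : R) :
    ∑ i, v i * (α * x i + β * y i + γ) =
      α * (∑ i, v i * x i) + β * (∑ i, v i * y i) + γ * ∑ i, v i := by
  simp only [Finset.mul_sum, ← Finset.sum_add_distrib]
  exact Finset.sum_congr rfl fun i _ => by ring

theorem zd_linear_payoff_relation_general {R S : Type*} [CommRing R] [Fintype S] [DecidableEq S]
    (C : Finset S) (p : S → R) (M : S → S → R) (v x y : S → R) (α β γ : R)
    (hp : ∀ i, ∑ j ∈ C, M i j = p i)
    (hstat : ∀ j, ∑ i, v i * M i j = v j)
    (hsum : ∑ i, v i = 1)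
    (hzd : ∀ i, zdVector C p i = α * x i + β * y i + γ) :
    α * (∑ i, v i * x i) + β * (∑ i, v i * y i) + γ = 0 :=
  calc α * (∑ i, v i * x i) + β * (∑ i, v i * y i) + γ
      = ∑ i, v i * (α * x i + β * y i + γ) := by
        rw [sum_mul_affine_combination, hsum, mul_one]
    _ = ∑ i, v i * zdVector C p i := by simp only [hzd]
    _ = 0 := sum_mul_zdVector_eq_zero hp fun j _ => hstat j

/-- ZD linear payoff relation: if the leader's ZD vector `p̃`
is a linear combination `α·x + β·y + γ·1` of the payoff vectors, then the
expected payoffs satisfy `α·E_b + β·E_r + γ = 0`. -/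
theorem zd_linear_payoff_relation
    (p : Fin 4 → ℝ) (q : Fin 2 → ℝ) (M : Fin 4 → Fin 4 → ℝ) (v x y : Fin 4 → ℝ)
    (α β γ : ℝ)
    (hM0 : ∀ i, M i 0 = p i * q 0)
    (hM1 : ∀ i, M i 1 = p i * (1 - q 0))
    (hM2 : ∀ i, M i 2 = (1 - p i) * q 1)
    (hM3 : ∀ i, M i 3 = (1 - p i) * (1 - q 1))
    (hstat : ∀ j, ∑ i, v i * M i j = v j)
    (hsum : ∑ i, v i = 1)
    (hzd : ∀ i, (![p 0 - 1, p 1 - 1, p 2, p 3] : Fin 4 → ℝ) i = α * x i + β * y i + γ) :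
    α * (∑ i, v i * x i) + β * (∑ i, v i * y i) + γ = 0 := by
  have leader_marginal (i : Fin 4) : ∑ j ∈ {0, 1}, M i j = p i := by
    rw [Finset.sum_pair zero_ne_one, hM0, hM1]; ring
  exact zd_linear_payoff_relation_general {0, 1} p M v x y α β γ leader_marginal hstat hsum
    (zdVector_fin_four p ▸ hzd)
end
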